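/- Let D ⊆ Q be simple artinian k-algebras (D a k-subalgebra of Q). Then htr D ≤ htr Q, i.e., the injective dimension of D ⊗_k D^op as a left module over itself is at most the injective dimension of Q ⊗_k Q^op as a left module over itself. -/

import Mathlib

open CategoryTheory Limits TensorProduct

universe u

/-- The injective dimension of a module `M`, defined as the least `n : ℕ∞` for which
there is an injective resolution of `M` that vanishes in all cohomological degrees `> n`. -/
noncomputable def ModuleCat.injDim {R : Type u} [Ring R] (M : ModuleCat.{u} R) : ℕ∞ :=
  sInf {n : ℕ∞ | ∃ I : InjectiveResolution M, ∀ i : ℕ, n < (i : ℕ∞) → IsZero (I.cocomplex.X i)}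

/-- The projective dimension of a module `M`, defined as the least `n : ℕ∞` for which
there is a projective resolution of `M` that vanishes in all homological degrees `> n`. -/
noncomputable def ModuleCat.projDim {R : Type u} [Ring R] (M : ModuleCat.{u} R) : ℕ∞ :=
  sInf {n : ℕ∞ | ∃ P : ProjectiveResolution M, ∀ i : ℕ, n < (i : ℕ∞) → IsZero (P.complex.X i)}

/-- The injective dimension of a ring as a left module over itself. -/
noncomputable def Ring.selfInjDim (R : Type u) [Ring R] : ℕ∞ :=
  ModuleCat.injDim (ModuleCat.of R R)

/-- The left global dimension of a ring: the supremum of the projective dimensions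
of all left `R`-modules. -/
noncomputable def Ring.globalDim (R : Type u) [Ring R] : ℕ∞ :=
  ⨆ M : ModuleCat.{u} R, M.projDim

universe v

/-- Abelian categories: finite resolution gives finite injective dimension. -/
theorem hasInjDim_of_res {C : Type u} [Category.{v} C] [Abelian C] {M : C}
    (I : InjectiveResolution M) (n : ℕ) (h : ∀ i : ℕ, n < i → IsZero (I.cocomplex.X i)) :
    HasInjectiveDimensionLT M (n + 1) := by
  let := HasExt.standard C
  rw [hasInjectiveDimensionLT_iff]
  intro i hi Y e
  obtain ⟨f, hf, rfl⟩ := I.extMk_surjective e (i + 1) rfl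
  obtain rfl : f = 0 := (h i (by lia)).eq_of_tgt _ _
  simp

theorem hasInjDim_map {C : Type u} [Category.{v} C] [Abelian C] [EnoughInjectives C]
    {D : Type u} [Category.{v} D] [Abelian D] (F : C ⥤ D) [F.Additive]
    [PreservesFiniteLimits F] [PreservesFiniteColimits F]
    (hF : ∀ X : C, Injective X → Injective (F.obj X)) (n : ℕ) :
    ∀ M : C, HasInjectiveDimensionLT M (n + 1) → HasInjectiveDimensionLT (F.obj M) (n + 1) := by
  induction n with
  | zero =>
    intro M h
    have := hF M (injective_iff_hasInjectiveDimensionLT_one.2 h)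
    infer_instance
  | succ n ih =>
    intro M h
    obtain ⟨ip⟩ := EnoughInjectives.presentation M
    have hS := ip.shortExact_shortComplex
    have hK := (hS.hasInjectiveDimensionLT_X₃_iff n ip.injective).2 h
    have hS' := hS.map_of_exact F
    exact (hS'.hasInjectiveDimensionLT_X₃_iff n (hF _ ip.injective)).1 (ih _ hK)

theorem aug_res {C : Type u} [Category.{v} C] [Abelian C] (S : ShortComplex C) (hS : S.ShortExact)
    (h2 : Injective S.X₂) (I : InjectiveResolution S.X₃) :
    ∃ J : InjectiveResolution S.X₁, ∀ i, IsZero (I.cocomplex.X i) →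
      IsZero (J.cocomplex.X (i + 1)) := by
  have hmono := hS.mono_f
  have hepi := hS.epi_g
  let ι0 : S.X₃ ⟶ I.cocomplex.X 0 := I.ι.f 0
  have hι : Mono ι0 := inferInstanceAs (Mono (I.ι.f 0))
  have hw0 : ι0 ≫ I.cocomplex.d 0 1 = 0 := I.ι_f_zero_comp_complex_d
  have hex0 : (ShortComplex.mk _ _ hw0).Exact := I.exact₀
  have w : (S.g ≫ ι0) ≫ I.cocomplex.d 0 1 = 0 := by rw [Category.assoc, hw0, comp_zero]
  have w1 : S.f ≫ (S.g ≫ ι0) = 0 := by simp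
  have ex1 : (ShortComplex.mk _ _ w1).Exact := by
    let α : S ⟶ ShortComplex.mk _ _ w1 :=
      { τ₁ := 𝟙 _
        τ₂ := 𝟙 _
        τ₃ := ι0 }
    have : Epi α.τ₁ := inferInstanceAs (Epi (𝟙 _))
    have : IsIso α.τ₂ := inferInstanceAs (IsIso (𝟙 _))
    have : Mono α.τ₃ := hι
    exact (ShortComplex.exact_iff_of_epi_of_isIso_of_mono α).1 hS.exact
  have ex2 : (ShortComplex.mk _ _ w).Exact := by
    let α : ShortComplex.mk _ _ w ⟶ ShortComplex.mk _ _ hw0 :=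
      { τ₁ := S.g
        τ₂ := 𝟙 _
        τ₃ := 𝟙 _ }
    have : Epi α.τ₁ := hepi
    have : IsIso α.τ₂ := inferInstanceAs (IsIso (𝟙 _))
    have : Mono α.τ₃ := inferInstanceAs (Mono (𝟙 _))
    exact (ShortComplex.exact_iff_of_epi_of_isIso_of_mono α).2 hex0
  let K := CochainComplex.augment I.cocomplex (S.g ≫ ι0) w
  have hK01 : S.f ≫ K.d 0 1 = 0 := w1
  have hKex : ∀ n, K.ExactAt (n + 1) := by
    intro n
    rw [HomologicalComplex.exactAt_iff' _ n (n + 1) (n + 1 + 1) (by simp) (by simp)]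
    cases n with
    | zero => exact ex2
    | succ n => exact I.exact_succ n
  have h0 := CochainComplex.fromSingle₀Equiv_symm_apply_f_zero (C := K) S.f hK01
  refine ⟨{ cocomplex := K
            injective := ?_
            ι := (CochainComplex.fromSingle₀Equiv K S.X₁).symm ⟨S.f, hK01⟩
            quasiIso := ?_ }, ?_⟩
  · rintro (_ | n)
    · exact h2
    · exact I.injective n
  · constructor
    intro n
    cases n with
    | zero =>
      rw [CochainComplex.quasiIsoAt₀_iff, ShortComplex.quasiIso_iff_of_zeros]
      · refine (ShortComplex.exact_and_mono_f_iff_of_iso ?_).2 ⟨ex1, hmono⟩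
        exact ShortComplex.isoMk (Iso.refl _) (Iso.refl _) (Iso.refl _) 
          (by exact (Category.id_comp S.f).trans (h0.symm.trans (Category.comp_id _).symm))
          ((Category.id_comp _).trans (Category.comp_id _).symm)
      all_goals rfl
    | succ n =>
      rw [quasiIsoAt_iff_exactAt]
      · apply hKex
      · apply CochainComplex.exactAt_succ_single_obj
  · intro i hi
    exact hi

theorem res_of_hasInjDim {C : Type u} [Category.{v} C] [Abelian C] [EnoughInjectives C] (n : ℕ) :
    ∀ M : C, HasInjectiveDimensionLT M (n + 1) →
      ∃ I : InjectiveResolution M, ∀ i : ℕ, n < i → IsZero (I.cocomplex.X i) := by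
  induction n with
  | zero =>
    intro M h
    have := injective_iff_hasInjectiveDimensionLT_one.2 h
    refine ⟨InjectiveResolution.self M, fun i hi => ?_⟩
    exact HomologicalComplex.isZero_single_obj_X _ _ _ _ (by lia)
  | succ n ih =>
    intro M h
    obtain ⟨ip⟩ := EnoughInjectives.presentation M
    have hS := ip.shortExact_shortComplex
    have hK := (hS.hasInjectiveDimensionLT_X₃_iff n ip.injective).2 h
    obtain ⟨I, hI⟩ := ih _ hK
    obtain ⟨J, hJ⟩ := aug_res _ hS ip.injective I
    refine ⟨J, ?_⟩
    rintro (_ | i) hi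
    · simp at hi
    · exact hJ i (hI i (by lia))

theorem restrict_flim {A B : Type u} [Ring A] [Ring B] (φ : A →+* B) :
    PreservesFiniteLimits (ModuleCat.restrictScalars.{u} φ) := by
  refine ⟨fun J _ _ => ⟨fun {F} => ?_⟩⟩
  infer_instance

/-- A dual basis of `B` as a right `A`-module. -/
structure DualBasis {A B : Type u} [Ring A] [Ring B] (φ : A →+* B) where
  ι : Type u
  b : ι → B
  S : B →+ (ι →₀ A)
  hS : ∀ x a i, S (x * φ a) i = S x i * a
  hrec : ∀ x, (S x).sum (fun i a => b i * φ a) = x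

theorem DualBasis.baer {A B : Type u} [Ring A] [Ring B] {φ : A →+* B} (d : DualBasis φ)
    (E : Type u) [AddCommGroup E] [Module B E] [Module A E]
    (hsm : ∀ (a : A) (e : E), a • e = φ a • e)
    (hE : Module.Injective B E) : Module.Injective A E := by
  classical
  apply Module.Baer.injective
  intro J g
  let p : (J →₀ B) →ₗ[B] B := Finsupp.linearCombination B (fun x : J => φ x)
  let q : (J →₀ B) →ₗ[B] E := Finsupp.linearCombination B (fun x : J => g x)
  have hpq : LinearMap.ker p ≤ LinearMap.ker q := by
    intro z hz
    rw [LinearMap.mem_ker] at hz ⊢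
    have hz' : ∑ j ∈ z.support, z j * φ j = 0 := hz
    change ∑ j ∈ z.support, z j • g j = 0
    let T := z.support.biUnion (fun j => (d.S (z j)).support)
    have h1 : ∀ j ∈ z.support, z j • g j
        = ∑ i ∈ T, d.b i • g (d.S (z j) i • j) := by
      intro j hj
      conv_lhs => rw [← d.hrec (z j)]
      rw [Finsupp.sum_of_support_subset (s := T), Finset.sum_smul]
      · refine Finset.sum_congr rfl fun i _ => ?_
        rw [mul_smul, ← hsm, map_smul]
      · exact Finset.subset_biUnion_of_mem (fun j => (d.S (z j)).support) hj
      · simp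
    rw [Finset.sum_congr rfl h1, Finset.sum_comm]
    refine Finset.sum_eq_zero fun i _ => ?_
    rw [← Finset.smul_sum, ← map_sum]
    have : ∑ j ∈ z.support, d.S (z j) i • j = 0 := by
      apply Subtype.ext
      have h2 := congrArg (fun x => d.S x i) hz'
      simp only [map_sum, Finsupp.coe_finsetSum, Finset.sum_apply, d.hS] at h2
      simpa using h2
    rw [this, map_zero, smul_zero]
  obtain ⟨h, hh⟩ := hE.out ((LinearMap.ker p).liftQ p le_rfl)
    (by rw [← LinearMap.ker_eq_bot]; exact Submodule.ker_liftQ_eq_bot _ _ _ le_rfl)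
    ((LinearMap.ker p).liftQ q hpq)
  refine ⟨{ toFun := fun a => h (φ a), map_add' := by simp, map_smul' := ?_ }, ?_⟩
  · intro a x
    rw [smul_eq_mul, map_mul, ← smul_eq_mul, map_smul, ← hsm, RingHom.id_apply]
  · intro x hx
    have := hh (Submodule.Quotient.mk (Finsupp.single ⟨x, hx⟩ 1))
    simpa [p, q] using this

theorem exists_dual {k : Type u} [Field k] {D Q : Type u} [Ring D] [Ring Q]
    [Algebra k D] [Algebra k Q] [IsSemisimpleRing D] (f : D →ₐ[k] Q) :
    ∃ S : Q →ₗ[k] (Q →₀ D), (∀ x a i, S (x * f a) i = S x i * a) ∧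
      ∀ x, (S x).sum (fun i a => i * f a) = x := by
  let : Module Dᵐᵒᵖ Q := Module.compHom Q (RingHom.op (f : D →+* Q))
  have hsm : ∀ (a : Dᵐᵒᵖ) (x : Q), a • x = x * f a.unop := fun a x => rfl
  have : Module.Projective Dᵐᵒᵖ Q := Module.projective_of_isSemisimpleRing ..
  obtain ⟨s, hs⟩ := this.out
  let S : Q →ₗ[k] (Q →₀ D) :=
    { toFun := fun x => (s x).mapRange MulOpposite.unop rfl
      map_add' := by intro x y; ext i; simp
      map_smul' := by
        intro c x
        ext i
        have : c • x = (MulOpposite.op (algebraMap k D c)) • x := by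
          rw [hsm]
          simp [Algebra.smul_def, Algebra.commutes]
        rw [this, map_smul]
        simp [Algebra.smul_def, Algebra.commutes] }
  refine ⟨S, ?_, ?_⟩
  · intro x a i
    have : x * f a = MulOpposite.op a • x := rfl
    simp [S, this]
  · intro x
    have := hs x
    rw [Finsupp.linearCombination_apply] at this
    simp only [S, LinearMap.coe_mk, AddHom.coe_mk]
    rw [Finsupp.sum_mapRange_index (by simp)]
    exact this

theorem exists_retr {k : Type u} [Field k] {D Q : Type u} [Ring D] [Ring Q]
    [Algebra k D] [Algebra k Q] [IsSemisimpleRing D] (f : D →ₐ[k] Q)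
    (hf : Function.Injective f) :
    ∃ p : Q →ₗ[k] D, (∀ a x, p (f a * x) = a * p x) ∧ p 1 = 1 := by
  let : Module D Q := Module.compHom Q (f : D →+* Q)
  have hsm : ∀ (a : D) (x : Q), a • x = f a * x := fun a x => rfl
  let F : D →ₗ[D] Q := { toFun := f, map_add' := map_add f, map_smul' := by simp [hsm] }
  obtain ⟨p, hp⟩ := IsSemisimpleModule.extension_property F hf LinearMap.id
  refine ⟨{ toFun := p, map_add' := map_add p, map_smul' := ?_ }, ?_, ?_⟩
  · intro c x
    have : c • x = (algebraMap k D c) • x := by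
      rw [hsm]; simp [Algebra.smul_def]
    rw [this, map_smul]; simp [Algebra.smul_def]
  · intro a x
    exact map_smul p a x
  · have := LinearMap.congr_fun hp 1
    simpa [F] using this

/-- the tensor product of dual bases -/
theorem exists_dualBasis {k : Type u} [Field k] {D Q D' Q' : Type u} [Ring D] [Ring Q]
    [Algebra k D] [Algebra k Q] [Ring D'] [Ring Q'] [Algebra k D'] [Algebra k Q']
    [IsSemisimpleRing D] [IsSemisimpleRing D'] (f : D →ₐ[k] Q) (g : D' →ₐ[k] Q') :
    Nonempty (DualBasis (Algebra.TensorProduct.map f g : D ⊗[k] D' →+* Q ⊗[k] Q')) := by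
  obtain ⟨S, hS, hS'⟩ := exists_dual f
  obtain ⟨T, hT, hT'⟩ := exists_dual g
  let U : Q ⊗[k] Q' →ₗ[k] (Q × Q' →₀ D ⊗[k] D') :=
    (finsuppTensorFinsupp k k D D' Q Q').toLinearMap ∘ₗ TensorProduct.map S T
  have hU : ∀ x y i, U (x ⊗ₜ y) i = S x i.1 ⊗ₜ T y i.2 := fun x y i =>
    finsuppTensorFinsupp_apply ..
  refine ⟨⟨Q × Q', fun i => i.1 ⊗ₜ i.2, U.toAddMonoidHom, ?_, ?_⟩⟩
  · intro x a i
    change U _ i = U _ i * a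
    induction x with
    | zero => simp
    | add x y hx hy => simp only [add_mul, map_add, Finsupp.add_apply, hx, hy]
    | tmul x y =>
      induction a with
      | zero => simp
      | add x y hx hy => simp only [mul_add, map_add, Finsupp.add_apply, hx, hy]
      | tmul a c => simp [hU, hS, hT]
  · intro x
    change (U x).sum _ = x
    induction x with
    | zero => simp
    | add x y hx hy =>
      rw [map_add, Finsupp.sum_add_index', hx, hy]
      · simp
      · intros; simp [mul_add]
    | tmul x y =>
      conv_rhs => rw [← hS' x, ← hT' y]
      change ((finsuppTensorFinsupp k k D D' Q Q') (S x ⊗ₜ T y)).sum _ = _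
      generalize S x = s
      generalize T y = t
      rw [Finsupp.sum_of_support_subset (s := s.support ×ˢ t.support)]
      · rw [Finsupp.sum, Finsupp.sum, TensorProduct.sum_tmul, Finset.sum_product]
        refine Finset.sum_congr rfl fun i _ => ?_
        rw [TensorProduct.tmul_sum]
        refine Finset.sum_congr rfl fun j _ => ?_
        simp
      · intro i hi
        rw [Finsupp.mem_support_iff, finsuppTensorFinsupp_apply] at hi
        simp only [Finset.mem_product, Finsupp.mem_support_iff]
        constructor <;> (intro h; simp [h] at hi)
      · simp

/-!
Statement 3 (Proposition 1.5(a)): if `D ⊆ Q` are simple artinian `k`-algebras then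
`htr D ≤ htr Q`, where `htr A` is the injective dimension of `A ⊗[k] Aᵐᵒᵖ` as a left
module over itself.
-/

theorem stmt_3 (k : Type u) [Field k] (D Q : Type u) [Ring D] [Ring Q]
    [Algebra k D] [Algebra k Q]
    [IsSimpleRing D] [IsArtinianRing D] [IsSimpleRing Q] [IsArtinianRing Q]
    (f : D →ₐ[k] Q) (hf : Function.Injective f) :
    Ring.selfInjDim (D ⊗[k] Dᵐᵒᵖ) ≤ Ring.selfInjDim (Q ⊗[k] Qᵐᵒᵖ) := by

  classical
  unfold Ring.selfInjDim
  generalize hN : ModuleCat.injDim (ModuleCat.of (Q ⊗[k] Qᵐᵒᵖ) (Q ⊗[k] Qᵐᵒᵖ)) = N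
  cases N with
  | top => exact le_top
  | coe n =>
    have hne : {m : ℕ∞ | ∃ I : InjectiveResolution
        (ModuleCat.of (Q ⊗[k] Qᵐᵒᵖ) (Q ⊗[k] Qᵐᵒᵖ)),
        ∀ i : ℕ, m < (i : ℕ∞) → IsZero (I.cocomplex.X i)}.Nonempty :=
      ⟨⊤, InjectiveResolution.of _, fun i hi => absurd hi not_top_lt⟩
    have hmem := csInf_mem hne
    change ModuleCat.injDim _ ∈ _ at hmem
    rw [hN] at hmem
    obtain ⟨I, hI⟩ := hmem
    have hB := hasInjDim_of_res I n (fun i hi => hI i (by exact_mod_cast hi))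
    let g : Dᵐᵒᵖ →ₐ[k] Qᵐᵒᵖ := AlgHom.op f
    have hg : Function.Injective g := fun x y h =>
      MulOpposite.unop_injective (hf (MulOpposite.op_injective h))
    let φ : D ⊗[k] Dᵐᵒᵖ →+* Q ⊗[k] Qᵐᵒᵖ := (Algebra.TensorProduct.map f g : _ →ₐ[k] _)
    obtain ⟨d⟩ := exists_dualBasis f g
    have hlim := restrict_flim φ
    have hF : ∀ X : ModuleCat.{u} (Q ⊗[k] Qᵐᵒᵖ), Injective X →
        Injective ((ModuleCat.restrictScalars.{u} φ).obj X) := by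
      intro X hX
      have h1 : Module.Injective (Q ⊗[k] Qᵐᵒᵖ) X :=
        (Module.injective_iff_injective_object _ _).2 hX
      have h2 : Module.Injective (D ⊗[k] Dᵐᵒᵖ) ((ModuleCat.restrictScalars.{u} φ).obj X) :=
        @DualBasis.baer _ _ _ _ φ d X _ _ ((ModuleCat.restrictScalars.{u} φ).obj X).isModule
          (fun a e => rfl) h1
      exact (Module.injective_iff_injective_object (D ⊗[k] Dᵐᵒᵖ)
        ((ModuleCat.restrictScalars.{u} φ).obj X)).1 h2
    have hA := hasInjDim_map (ModuleCat.restrictScalars.{u} φ) hF n _ hB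
    obtain ⟨p, hp, hp1⟩ := exists_retr f hf
    obtain ⟨q, hq, hq1⟩ := exists_retr g hg
    let P : Q ⊗[k] Qᵐᵒᵖ →ₗ[k] D ⊗[k] Dᵐᵒᵖ := TensorProduct.map p q
    have hP : ∀ a x, P (φ a * x) = a * P x := by
      intro a x
      induction x with
      | zero => simp
      | add x y hx hy => simp only [mul_add, map_add, hx, hy]
      | tmul x y =>
        induction a with
        | zero => simp
        | add a b ha hb => simp only [add_mul, map_add, ha, hb]
        | tmul a b => simp [P, φ, hp, hq]
    have hP1 : P 1 = 1 := by
      simp [P, Algebra.TensorProduct.one_def, hp1, hq1]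
    let R : Retract (ModuleCat.of (D ⊗[k] Dᵐᵒᵖ) (D ⊗[k] Dᵐᵒᵖ))
        ((ModuleCat.restrictScalars.{u} φ).obj (ModuleCat.of (Q ⊗[k] Qᵐᵒᵖ) (Q ⊗[k] Qᵐᵒᵖ))) :=
      { i := ModuleCat.ofHom (Y := (ModuleCat.restrictScalars.{u} φ).obj
              (ModuleCat.of (Q ⊗[k] Qᵐᵒᵖ) (Q ⊗[k] Qᵐᵒᵖ)))
            { toFun := fun a => φ a
              map_add' := map_add φ
              map_smul' := map_mul φ }
        r := ModuleCat.ofHom (X := (ModuleCat.restrictScalars.{u} φ).obj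
              (ModuleCat.of (Q ⊗[k] Qᵐᵒᵖ) (Q ⊗[k] Qᵐᵒᵖ)))
            { toFun := fun x => P x
              map_add' := map_add P
              map_smul' := hP }
        retract := by
          ext
          change P (φ 1) = 1
          rw [map_one, hP1] }
    have hA' := R.hasInjectiveDimensionLT (n + 1)
    obtain ⟨J, hJ⟩ := res_of_hasInjDim n _ hA'
    exact sInf_le ⟨J, fun i hi => hJ i (by exact_mod_cast hi)⟩
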